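/- Let n ≥ 1 and let p, q ∈ ℝⁿ. Set λ = (1/2)·max_{1≤i≤n} (p_i − q_i). Define the vector v ∈ ℝ^{n+1} by v_0 = 0 and v_i = −q_i − λ for i = 1, …, n. Then v is a max-plus eigenvector with eigenvalue λ of the transpose of the (n+1)×(n+1) block matrix A over ℝ ∪ {−∞} whose (0, i) entry is −q_i, whose (i, 0) entry is p_i (for i = 1, …, n), and whose all other entries are −∞; concretely: max_{1≤i≤n} (p_i + v_i) = λ + v_0, and −q_i + v_0 = λ + v_i for every i = 1, …, n. -/

import Mathlib

/-!
Every finite entry of `Aᵀ` lies in row `0` or column `0`, off the corner, so row `i ≥ 1` of the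
eigenvalue equation has a single finite term and reads `-q i + v 0 = lam + v i`, whereas row `0`
reads `max (p i + v i) = lam + v 0`. Solving the former for `v i` and substituting into the latter
leaves `2 * lam = max (p i - q i)`.
-/

theorem sup'_univ_fin_succ {α : Type*} [SemilatticeSup α] {n : ℕ} [NeZero n]
    (f : Fin (n + 1) → α) :
    Finset.univ.sup' Finset.univ_nonempty f =
      f 0 ⊔ Finset.univ.sup' Finset.univ_nonempty (fun i : Fin n => f i.succ) := by
  simp only [Fin.univ_succ n]
  rw [Finset.sup'_cons Finset.univ_nonempty.map, Finset.sup'_map]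
  rfl

theorem coe_sup'_withBot {ι α : Type*} [SemilatticeSup α] {s : Finset ι} (hs : s.Nonempty)
    (f : ι → α) :
    ((s.sup' hs f : α) : WithBot α) = s.sup' hs (fun i => (f i : WithBot α)) := by
  rw [Finset.coe_sup', Finset.sup'_eq_sup]
  rfl

/-- `(lam, v)` is an eigenpair of the matrix `B` in max-plus algebra. Here `⊥ : WithBot M` plays
the role of `-∞`, while the eigenvalue and the coordinates of the eigenvector are finite. -/
def IsMaxPlusEigenpair {ι M : Type*} [Fintype ι] [Nonempty ι] [SemilatticeSup M] [Add M]
    (B : Matrix ι ι (WithBot M)) (lam : M) (v : ι → M) : Prop :=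
  ∀ k, Finset.univ.sup' Finset.univ_nonempty (fun l => B k l + (v l : WithBot M)) =
    ((lam + v k : M) : WithBot M)

section Bordered

variable {M : Type*} [SemilatticeSup M] [Add M] {n : ℕ} [NeZero n]
  {B : Matrix (Fin (n + 1)) (Fin (n + 1)) (WithBot M)}

theorem sup'_bordered_row_zero {p : Fin n → M} (h00 : B 0 0 = ⊥)
    (h0i : ∀ i : Fin n, B 0 i.succ = p i) (v : Fin (n + 1) → M) :
    Finset.univ.sup' Finset.univ_nonempty (fun l => B 0 l + (v l : WithBot M)) =
      (Finset.univ.sup' Finset.univ_nonempty (fun i : Fin n => p i + v i.succ) : M) := by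
  simp only [sup'_univ_fin_succ, h00, h0i, WithBot.bot_add, bot_sup_eq, coe_sup'_withBot,
    WithBot.coe_add]

theorem sup'_bordered_row_succ {i : Fin n} {r : M} (hi0 : B i.succ 0 = r)
    (hij : ∀ j : Fin n, B i.succ j.succ = ⊥) (v : Fin (n + 1) → M) :
    Finset.univ.sup' Finset.univ_nonempty (fun l => B i.succ l + (v l : WithBot M)) =
      (r + v 0 : M) := by
  simp only [sup'_univ_fin_succ, hi0, hij, WithBot.bot_add, Finset.sup'_const, sup_bot_eq,
    WithBot.coe_add]

theorem isMaxPlusEigenpair_bordered_iff {p r : Fin n → M} (h00 : B 0 0 = ⊥)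
    (h0i : ∀ i : Fin n, B 0 i.succ = p i) (hi0 : ∀ i : Fin n, B i.succ 0 = r i)
    (hij : ∀ i j : Fin n, B i.succ j.succ = ⊥) {lam : M} {v : Fin (n + 1) → M} :
    IsMaxPlusEigenpair B lam v ↔
      Finset.univ.sup' Finset.univ_nonempty (fun i : Fin n => p i + v i.succ) = lam + v 0 ∧
        ∀ i : Fin n, r i + v 0 = lam + v i.succ := by
  simp only [IsMaxPlusEigenpair, Fin.forall_fin_succ, sup'_bordered_row_zero h00 h0i,
    sup'_bordered_row_succ (hi0 _) (hij _), WithBot.coe_inj]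

end Bordered

section OrderedGroup

open Matrix

variable {M : Type*} [AddCommGroup M] [LinearOrder M] [IsOrderedAddMonoid M]

theorem sup'_add_sub_sub {ι : Type*} {s : Finset ι} (hs : s.Nonempty) {p q : ι → M} {lam : M}
    (hlam : lam + lam = s.sup' hs (fun i => p i - q i)) (c : M) :
    s.sup' hs (fun i => p i + (c - q i - lam)) = lam + c :=
  calc
    s.sup' hs (fun i => p i + (c - q i - lam))
        = s.sup' hs (fun i => p i - q i + (c - lam)) := by congr 1; ext i; abel
    _ = s.sup' hs (fun i => p i - q i) + (c - lam) := (Finset.sup'_add ..).symm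
    _ = lam + c := by rw [← hlam]; abel

theorem stmt11_general {n : ℕ} [NeZero n] {p q : Fin n → M} {lam : M}
    (hlam : lam + lam = Finset.univ.sup' Finset.univ_nonempty (fun i => p i - q i))
    {A : Matrix (Fin (n + 1)) (Fin (n + 1)) (WithBot M)}
    (hA00 : A 0 0 = ⊥)
    (hA0i : ∀ i : Fin n, A 0 i.succ = ((-q i : M) : WithBot M))
    (hAi0 : ∀ i : Fin n, A i.succ 0 = ((p i : M) : WithBot M))
    (hAij : ∀ i j : Fin n, A i.succ j.succ = ⊥)
    {v : Fin (n + 1) → M}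
    (hvi : ∀ i : Fin n, v i.succ = v 0 - q i - lam) :
    IsMaxPlusEigenpair Aᵀ lam v ∧
      Finset.univ.sup' Finset.univ_nonempty (fun i : Fin n => p i + v i.succ) = lam + v 0 ∧
        ∀ i : Fin n, -q i + v 0 = lam + v i.succ := by
  have row_zero : Finset.univ.sup' Finset.univ_nonempty (fun i : Fin n => p i + v i.succ) =
      lam + v 0 := by
    simpa only [hvi] using sup'_add_sub_sub Finset.univ_nonempty hlam (v 0)
  have row_succ (i : Fin n) : -q i + v 0 = lam + v i.succ := by
    rw [hvi]
    abel
  have eigenpair : IsMaxPlusEigenpair Aᵀ lam v :=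
    (isMaxPlusEigenpair_bordered_iff (B := Aᵀ) hA00 hAi0 hA0i fun i j => hAij j i).2
      ⟨row_zero, row_succ⟩
  exact ⟨eigenpair, row_zero, row_succ⟩

end OrderedGroup

theorem stmt11 (n : ℕ) [NeZero n] (p q : Fin n → ℝ) (lam : ℝ)
    (hlam : lam = (1 / 2) * Finset.univ.sup' Finset.univ_nonempty (fun i => p i - q i))
    (A : Fin (n + 1) → Fin (n + 1) → WithBot ℝ)
    (hA00 : A 0 0 = ⊥)
    (hA0i : ∀ i : Fin n, A 0 i.succ = ((-q i : ℝ) : WithBot ℝ))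
    (hAi0 : ∀ i : Fin n, A i.succ 0 = ((p i : ℝ) : WithBot ℝ))
    (hAij : ∀ i j : Fin n, A i.succ j.succ = ⊥)
    (v : Fin (n + 1) → ℝ)
    (hv0 : v 0 = 0)
    (hvi : ∀ i : Fin n, v i.succ = -q i - lam) :
    -- `v` is a max-plus eigenvector of the transpose of `A` with eigenvalue `lam`:
    (∀ k, Finset.univ.sup' Finset.univ_nonempty
        (fun l => A l k + ((v l : ℝ) : WithBot ℝ)) = ((lam + v k : ℝ) : WithBot ℝ)) ∧
    -- concretely:
    Finset.univ.sup' Finset.univ_nonempty (fun i : Fin n => p i + v i.succ) = lam + v 0 ∧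
    (∀ i : Fin n, -q i + v 0 = lam + v i.succ) := by
  exact stmt11_general (by linarith) hA00 hA0i hAi0 hAij fun i => by rw [hvi, hv0, zero_sub]
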